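/- Fix a > 1 and set W_∞(s) = 1 + (1/8) Σ_{k=1}^{∞} X₁(s)² ⋯ X_k(s)² for 0 < s < e^{a−1}. Then there exist δ > 0 and a continuous function n : [0,δ) → ℝ, differentiable on (0,δ), with n(0) = 0, such that for all s ∈ (0,δ): W_∞(s) − 1 = ( s n'(s) − n(s)² − 2 s n(s) − s n(s)² ) / ( 2 + 2 n(s) + n(s)² ). -/

import Mathlib

open MeasureTheory Real Filter Set

noncomputable section

abbrev E3 := EuclideanSpace ℝ (Fin 3)

/-- `i`-th partial derivative of a spinor field. -/
def pd (i : Fin 3) (φ : E3 → ℂ × ℂ) (x : E3) : ℂ × ℂ :=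
  fderiv ℝ φ x (EuclideanSpace.single i 1)

/-- The operator `σ·∇` built from the Pauli matrices. -/
def sigmaGrad (φ : E3 → ℂ × ℂ) (x : E3) : ℂ × ℂ :=
  ((pd 2 φ x).1 + (pd 0 φ x).2 - Complex.I * (pd 1 φ x).2,
   (pd 0 φ x).1 + Complex.I * (pd 1 φ x).1 - (pd 2 φ x).2)

/-- Squared norm of a two-spinor value. -/
def nsq (p : ℂ × ℂ) : ℝ := ‖p.1‖ ^ 2 + ‖p.2‖ ^ 2

/-- Pauli matrix `σ₁` acting on `ℂ²`. -/
def pauli1 (p : ℂ × ℂ) : ℂ × ℂ := (p.2, p.1)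

/-- Pauli matrix `σ₂` acting on `ℂ²`. -/
def pauli2 (p : ℂ × ℂ) : ℂ × ℂ := (-(Complex.I * p.2), Complex.I * p.1)

/-- Pauli matrix `σ₃` acting on `ℂ²`. -/
def pauli3 (p : ℂ × ℂ) : ℂ × ℂ := (p.1, -p.2)

/-- The spin-orbit operator `σ·L`. -/
def sigmaL (φ : E3 → ℂ × ℂ) (x : E3) : ℂ × ℂ :=
  (-Complex.I) •
    (pauli1 ((x 1 : ℂ) • pd 2 φ x - (x 2 : ℂ) • pd 1 φ x) +
     pauli2 ((x 2 : ℂ) • pd 0 φ x - (x 0 : ℂ) • pd 2 φ x) +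
     pauli3 ((x 0 : ℂ) • pd 1 φ x - (x 1 : ℂ) • pd 0 φ x))

/-- `σ·x = σ₁x₁ + σ₂x₂ + σ₃x₃` acting on a spinor value. -/
def sigmaDotX (x : E3) (p : ℂ × ℂ) : ℂ × ℂ :=
  ((x 2 : ℂ) * p.1 + ((x 0 : ℂ) - Complex.I * (x 1 : ℂ)) * p.2,
   ((x 0 : ℂ) + Complex.I * (x 1 : ℂ)) * p.1 - (x 2 : ℂ) * p.2)

/-- Inequality (R8) for a weight `W`, a radius `R` and a constant `C`. -/
def IneqR8 (W : ℝ → ℝ) (R C : ℝ) : Prop :=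
  ∀ φ : E3 → ℂ × ℂ, ContDiff ℝ (⊤ : ℕ∞) φ → HasCompactSupport φ →
    (∫ x : E3, (W ‖x‖ / ‖x‖) * nsq (φ x)) +
        C * (∫ x in Metric.sphere (0 : E3) R, nsq (φ x) ∂μH[2]) ≤
      ∫ x : E3, (nsq (sigmaGrad φ x) / (1 + W ‖x‖ / ‖x‖) + nsq (φ x))

/-- Iterated logarithmic functions: `Xk a 1 = (a - log s)⁻¹`, `Xk a (k+1) = X₁ ∘ Xk a k`. -/
def Xk (a : ℝ) : ℕ → ℝ → ℝ
  | 0, s => s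
  | k + 1, s => (a - Real.log (Xk a k s))⁻¹

/-- `π_j(s) = X₁(s)⋯X_j(s)`. -/
def piX (a : ℝ) (j : ℕ) (s : ℝ) : ℝ := ∏ i ∈ Finset.Icc 1 j, Xk a i s

/-- `Σ_{j=1}^k X₁(s)²⋯X_j(s)²`. -/
def sumX2 (a : ℝ) (k : ℕ) (s : ℝ) : ℝ := ∑ j ∈ Finset.Icc 1 k, (piX a j s) ^ 2

/-! The equation is the Riccati equation
`s n' = n² + 2 w + (2 s n + s n² + w (2 n + n²))` with `w = W_∞ - 1 = S / 8`,
`S = ∑ (X₁ ⋯ X_k)²`.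

Put `P = ∑ X₁ ⋯ X_k`; both series converge geometrically because `X_k ≤ 1 / a < 1` on `(0, 1)`. Since
`s X_k' = (X₁ ⋯ X_k) X_k`, termwise differentiation gives `s P' = (P² + S) / 2`, so `P / 2` solves
exactly the equation without the parenthesis. Near `0` the parenthesis has size at most about
`X₁³ / 8`, as `P = X₁ (1 + O(X₂))` and `s = o(X₁²)`. The correction `X₁²`, for which
`s (X₁²)' = 2 X₁³`, dominates both it and the cross term `P X₁² ≈ X₁³`: the function
`c = P / 2 + X₁²` is a strict subsolution (`subsolution_ineq`).

The solution with `n(δ) = c(δ)`, followed towards `0`, therefore stays above `c > 0`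
(`exists_riccati_of_subsolution`). All terms of the right-hand side are then nonnegative, so `n` is
nondecreasing in `s`, which bounds it by `n(δ)` and prevents blow-up, and `s n' ≥ n²` integrates to
`1 / n(s) ≥ log (δ / s)`, which forces `n(s) → 0`. -/

open scoped Topology

/-! ### A scalar Riccati equation singular at zero -/

/-- Solutions of a scalar ODE whose right-hand side is bounded and Lipschitz away from `t = 0` exist
on all of `(0, s₀]` for given data at `s₀`: the Picard-Lindelöf solutions on the intervals
`[ε, s₀]` agree by uniqueness. -/
lemma exists_solution_Ioc (f : ℝ → ℝ → ℝ) (s₀ x₀ : ℝ)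
    (hlip : ∀ e ∈ Ioo 0 s₀, ∃ K, ∀ t ∈ Icc e s₀, LipschitzWith K (f t))
    (hbd : ∀ e ∈ Ioo 0 s₀, ∃ L : NNReal, ∀ t ∈ Icc e s₀, ∀ x, ‖f t x‖ ≤ L)
    (hcont : ∀ x, ContinuousOn (fun t => f t x) (Ioc 0 s₀)) :
    ∃ n : ℝ → ℝ, n s₀ = x₀ ∧ ∀ t ∈ Ioc 0 s₀, HasDerivWithinAt n (f t (n t)) (Iic s₀) t := by
  have hloc : ∀ e : ℝ, ∃ α : ℝ → ℝ, e ∈ Ioo 0 s₀ → α s₀ = x₀ ∧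
      ∀ t ∈ Icc e s₀, HasDerivWithinAt α (f t (α t)) (Icc e s₀) t := by
    intro e
    by_cases he : e ∈ Ioo 0 s₀
    · obtain ⟨K, hK⟩ := hlip e he
      obtain ⟨L, hL⟩ := hbd e he
      have hs : s₀ ∈ Icc e s₀ := ⟨he.2.le, le_rfl⟩
      have hpl : IsPicardLindelof f (⟨s₀, hs⟩ : Icc e s₀) x₀ (L * (s₀ - e).toNNReal) 0 L K := by
        refine ⟨fun t ht => (hK t ht).lipschitzOnWith, fun x _ => (hcont x).mono ?_,
          fun t ht x _ => hL t ht x, ?_⟩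
        · exact fun t ht => ⟨he.1.trans_le ht.1, ht.2⟩
        · have : 0 ≤ s₀ - e := by linarith [he.2]
          simp [this]
      obtain ⟨α, h1, h2⟩ := hpl.exists_eq_forall_mem_Icc_hasDerivWithinAt₀
      exact ⟨α, fun _ => ⟨h1, h2⟩⟩
    · exact ⟨0, fun h => absurd h he⟩
  choose α hα using hloc
  have huniq : ∀ e e', e ∈ Ioo 0 s₀ → e' ∈ Ioo 0 s₀ → e' ≤ e → EqOn (α e) (α e') (Icc e s₀) := by
    intro e e' he he' hle
    obtain ⟨K, hK⟩ := hlip e he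
    have key : ∀ d ∈ Ioo 0 s₀, d ≤ e → ContinuousOn (α d) (Icc e s₀) ∧
        ∀ t ∈ Ioc e s₀, HasDerivWithinAt (α d) (f t (α d t)) (Iic t) t := by
      intro d hd hde
      refine ⟨fun t ht => (((hα d hd).2 t ⟨hde.trans ht.1, ht.2⟩).continuousWithinAt).mono
        (Icc_subset_Icc_left hde), fun t ht => ?_⟩
      refine ((hα d hd).2 t ⟨hde.trans ht.1.le, ht.2⟩).mono_of_mem_nhdsWithin ?_
      have hdt : d < t := hde.trans_lt ht.1
      exact mem_of_superset (Icc_mem_nhdsLE hdt) (Icc_subset_Icc_right ht.2)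
    refine ODE_solution_unique_of_mem_Icc_left (v := f) (s := fun _ => univ) (K := K)
      (fun t ht => (hK t ⟨ht.1.le, ht.2⟩).lipschitzOnWith)
      (key e he le_rfl).1 (key e he le_rfl).2 (fun _ _ => mem_univ _)
      (key e' he' hle).1 (key e' he' hle).2 (fun _ _ => mem_univ _) ?_
    rw [(hα e he).1, (hα e' he').1]
  refine ⟨fun t => if 0 < t then α (t / 2) t else x₀, ?_, fun t ht => ?_⟩
  · by_cases h : 0 < s₀
    · simp only [h, if_true]
      exact (hα (s₀ / 2) ⟨by linarith, by linarith⟩).1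
    · simp [h]
  · have h0 : 0 < t := ht.1
    have h1 : t / 4 ∈ Ioo 0 s₀ := ⟨by linarith, by linarith [ht.2]⟩
    have heq : ∀ u ∈ Icc (t / 2) s₀, (if 0 < u then α (u / 2) u else x₀) = α (t / 4) u := by
      intro u hu
      have hu0 : 0 < u := by linarith [hu.1]
      simp only [hu0, if_true]
      exact huniq (u / 2) (t / 4) ⟨by linarith, by linarith [hu.2]⟩ h1 (by linarith [hu.1])
        ⟨by linarith, hu.2⟩
    have htt : t ∈ Icc (t / 2) s₀ := ⟨by linarith, ht.2⟩
    have hd := ((hα (t / 4) h1).2 t ⟨by linarith, ht.2⟩).mono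
      (Icc_subset_Icc_left (by linarith : t / 4 ≤ t / 2))
    rw [← heq t htt] at hd
    refine (hd.congr heq (heq t htt)).mono_of_mem_nhdsWithin ?_
    filter_upwards [self_mem_nhdsWithin, mem_nhdsWithin_of_mem_nhds
      (Ioi_mem_nhds (by linarith : t / 2 < t))] with u hu1 hu2 using ⟨le_of_lt hu2, hu1⟩

/-- The right-hand side of the Riccati equation `s n' = riccati w s n` that the theorem solves, the
weight being `1 + w`. -/
def riccati (w : ℝ → ℝ) (s x : ℝ) : ℝ :=
  x ^ 2 + 2 * s * x + s * x ^ 2 + w s * (2 + 2 * x + x ^ 2)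

/-- A strict positive subsolution `c` of the Riccati equation, at most `1`, forces the solution
starting at `c s₀` and followed towards `s = 0` to exist up to `s = 0`, to stay above `c` and to
tend to `0`. -/
lemma exists_riccati_of_subsolution (w c c' : ℝ → ℝ) (s₀ : ℝ) (hs₀ : 0 < s₀) (hs₁ : s₀ ≤ 1)
    (hw : ContinuousOn w (Ioc 0 s₀)) (hw0 : ∀ s ∈ Ioc 0 s₀, 0 ≤ w s)
    (hw1 : ∀ s ∈ Ioc 0 s₀, w s ≤ 1)
    (hc : ∀ s ∈ Ioc 0 s₀, HasDerivAt c (c' s) s)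
    (hc0 : ∀ s ∈ Ioc 0 s₀, 0 < c s) (hc1 : ∀ s ∈ Ioc 0 s₀, c s ≤ 1)
    (hsub : ∀ s ∈ Ioc 0 s₀, riccati w s (c s) < s * c' s) :
    ∃ n : ℝ → ℝ, ContinuousOn n (Ico 0 s₀) ∧ n 0 = 0 ∧
      ∀ s ∈ Ioo 0 s₀, 0 < n s ∧ HasDerivAt n (riccati w s (n s) / s) s := by
  -- Truncating the unknown to `[0, 1]` makes the right-hand side globally Lipschitz in it.
  set κ : ℝ → ℝ := fun x => max 0 (min x 1) with hκ
  have κ0 : ∀ x, 0 ≤ κ x := fun x => le_max_left _ _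
  have κ1 : ∀ x, κ x ≤ 1 := fun x => max_le zero_le_one (min_le_right _ _)
  have κid : ∀ x, 0 ≤ x → x ≤ 1 → κ x = x := fun x h0 h1 => by simp [hκ, h0, h1]
  have κlip : ∀ x y, |κ x - κ y| ≤ |x - y| := fun x y => by
    have h1 := abs_max_sub_max_le_max 0 (min x 1) 0 (min y 1)
    have h2 := abs_min_sub_min_le_max x 1 y 1
    simp only [sub_self, abs_zero, abs_nonneg, sup_of_le_right, sup_of_le_left] at h1 h2
    exact h1.trans h2
  have hQ0 : ∀ s ∈ Ioc 0 s₀, ∀ x, 0 ≤ x → x ^ 2 ≤ riccati w s x := by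
    intro s hs x hx
    have h1 := hs.1.le
    have h2 := hw0 s hs
    have : 0 ≤ 2 * s * x + s * x ^ 2 + w s * (2 + 2 * x + x ^ 2) := by positivity
    unfold riccati; linarith
  have hQ9 : ∀ s ∈ Ioc 0 s₀, ∀ x, 0 ≤ x → x ≤ 1 → riccati w s x ≤ 9 := by
    intro s hs x hx hx1
    have h2 := hw0 s hs
    have h3 := hw1 s hs
    have hx2 : x ^ 2 ≤ 1 := by nlinarith
    have hs1 : s ≤ 1 := hs.2.trans hs₁
    have e1 : s * x ≤ 1 := mul_le_one₀ hs1 hx hx1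
    have e2 : s * x ^ 2 ≤ 1 := mul_le_one₀ hs1 (sq_nonneg _) hx2
    have e3 : w s * (2 + 2 * x + x ^ 2) ≤ 1 * 5 :=
      mul_le_mul h3 (by linarith) (by positivity) zero_le_one
    unfold riccati; linarith
  obtain ⟨n, hn0, hn⟩ := exists_solution_Ioc (fun s x => riccati w s (κ x) / s) s₀ (c s₀) (by
    intro e he
    refine ⟨(10 / e).toNNReal, fun t ht => LipschitzWith.of_dist_le_mul fun x y => ?_⟩
    have ht' : t ∈ Ioc 0 s₀ := ⟨he.1.trans_le ht.1, ht.2⟩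
    have htp := ht'.1
    rw [Real.coe_toNNReal _ (by have := he.1; positivity), Real.dist_eq, Real.dist_eq]
    have e1 : riccati w t (κ x) / t - riccati w t (κ y) / t =
        ((1 + t + w t) * (κ x + κ y) + 2 * t + 2 * w t) * (κ x - κ y) / t := by
      unfold riccati; ring
    have h2 := hw0 t ht'
    have h3 := hw1 t ht'
    have hb0 : 0 ≤ (1 + t + w t) * (κ x + κ y) + 2 * t + 2 * w t := by
      have := κ0 x; have := κ0 y; positivity
    have hb : (1 + t + w t) * (κ x + κ y) + 2 * t + 2 * w t ≤ 10 := by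
      have : (1 + t + w t) * (κ x + κ y) ≤ 3 * 2 :=
        mul_le_mul (by linarith [hs₁, ht.2]) (by linarith [κ1 x, κ1 y])
          (add_nonneg (κ0 x) (κ0 y)) (by norm_num)
      linarith [hs₁, ht.2]
    rw [e1, abs_div, abs_mul, abs_of_nonneg hb0, abs_of_pos htp, div_mul_eq_mul_div]
    exact div_le_div₀ (by positivity) (mul_le_mul hb (κlip x y) (abs_nonneg _) (by norm_num))
      he.1 ht.1) (by
    intro e he
    refine ⟨(9 / e).toNNReal, fun t ht x => ?_⟩
    have ht' : t ∈ Ioc 0 s₀ := ⟨he.1.trans_le ht.1, ht.2⟩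
    rw [Real.coe_toNNReal _ (by have := he.1; positivity), Real.norm_eq_abs,
      abs_of_nonneg (div_nonneg ((sq_nonneg _).trans (hQ0 t ht' _ (κ0 x))) ht'.1.le)]
    exact div_le_div₀ (by norm_num) (hQ9 t ht' _ (κ0 x) (κ1 x)) he.1 ht.1) (by
    intro x
    unfold riccati
    refine ContinuousOn.div ?_ continuousOn_id (fun t ht => ht.1.ne')
    fun_prop)
  have hcontn : ContinuousOn n (Ioc 0 s₀) := fun t ht =>
    ((hn t ht).continuousWithinAt).mono fun u hu => hu.2
  have hder : ∀ t ∈ Ioo 0 s₀, HasDerivAt n (riccati w t (κ (n t)) / t) t := fun t ht =>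
    (hn t ⟨ht.1, ht.2.le⟩).hasDerivAt (Iic_mem_nhds ht.2)
  have hmono : MonotoneOn n (Ioc 0 s₀) := by
    refine monotoneOn_of_deriv_nonneg (convex_Ioc _ _) hcontn ?_ ?_ <;> rw [interior_Ioc]
    · exact fun t ht => (hder t ht).differentiableAt.differentiableWithinAt
    · intro t ht
      rw [(hder t ht).deriv]
      exact div_nonneg ((sq_nonneg _).trans (hQ0 t ⟨ht.1, ht.2.le⟩ _ (κ0 _))) ht.1.le
  have hs₀mem : s₀ ∈ Ioc 0 s₀ := ⟨hs₀, le_rfl⟩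
  have hn1 : ∀ t ∈ Ioc 0 s₀, n t ≤ 1 := fun t ht =>
    (hmono ht hs₀mem ht.2).trans (hn0 ▸ hc1 s₀ hs₀mem)
  -- Comparison, after the reflection `s ↦ -s` since the fencing lemma runs forward.
  have hcn : ∀ t ∈ Ioc 0 s₀, c t ≤ n t := by
    intro t ht
    have hmem : ∀ x ∈ Icc (-s₀) (-t), -x ∈ Ioc 0 s₀ := fun x hx =>
      ⟨by linarith [ht.1, hx.2], by linarith [hx.1]⟩
    have hfence := image_le_of_deriv_right_lt_deriv_boundary' (a := -s₀) (b := -t)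
      (f := fun x => c (-x)) (f' := fun x => -c' (-x))
      (B := fun x => n (-x)) (B' := fun x => -(riccati w (-x) (κ (n (-x))) / (-x)))
      (fun x hx => (ContinuousAt.comp (g := c) (hc _ (hmem x hx)).continuousAt
        continuous_neg.continuousAt).continuousWithinAt)
      (fun x hx => by
        have h := (hc _ (hmem x ⟨hx.1, hx.2.le⟩)).comp x (hasDerivAt_neg x)
        simpa using! h.hasDerivWithinAt)
      (by simp [hn0])
      (hcontn.comp continuous_neg.continuousOn hmem) (fun x hx => by
        have h := (hn _ (hmem x ⟨hx.1, hx.2.le⟩)).scomp x (hasDerivAt_neg x).hasDerivWithinAt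
          (s := Ici x) (fun u hu => by
            have := hx.1; simp only [mem_Ici, mem_Iic] at hu ⊢; linarith)
        simpa using! h)
      (fun x hx hcx => by
        have hm := hmem x ⟨hx.1, hx.2.le⟩
        have hcx' : n (-x) = c (-x) := hcx.symm
        simp only [hcx', κid _ (hc0 _ hm).le (hc1 _ hm)]
        rw [neg_lt_neg_iff, div_lt_iff₀ hm.1, mul_comm]
        exact hsub _ hm)
    have := hfence (x := -t) ⟨by linarith [ht.2], le_rfl⟩
    simpa using this
  have hnpos : ∀ t ∈ Ioc 0 s₀, 0 < n t := fun t ht => (hc0 t ht).trans_le (hcn t ht)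
  have hder' : ∀ t ∈ Ioo 0 s₀, HasDerivAt n (riccati w t (n t) / t) t := by
    intro t ht
    have ht' : t ∈ Ioc 0 s₀ := ⟨ht.1, ht.2.le⟩
    have := hder t ht
    rwa [κid _ (hnpos t ht').le (hn1 t ht')] at this
  -- `s n' ≥ n ^ 2` says that `1 / n + log s` is nonincreasing.
  have hanti : AntitoneOn (fun t => (n t)⁻¹ + Real.log t) (Ioc 0 s₀) := by
    have hd : ∀ t ∈ Ioo 0 s₀, HasDerivAt (fun t => (n t)⁻¹ + Real.log t)
        (-(riccati w t (n t) / t) / n t ^ 2 + t⁻¹) t := fun t ht =>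
      ((hder' t ht).fun_inv (hnpos t ⟨ht.1, ht.2.le⟩).ne').add (Real.hasDerivAt_log ht.1.ne')
    refine antitoneOn_of_deriv_nonpos (convex_Ioc _ _) ?_ ?_ ?_
    · exact (hcontn.inv₀ fun t ht => (hnpos t ht).ne').add
        (Real.continuousOn_log.mono fun t ht => ht.1.ne')
    · rw [interior_Ioc]
      exact fun t ht => (hd t ht).differentiableAt.differentiableWithinAt
    · rw [interior_Ioc]
      intro t ht
      have htp := ht.1
      have hp := hnpos t ⟨ht.1, ht.2.le⟩
      have hq := hQ0 t ⟨ht.1, ht.2.le⟩ _ hp.le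
      rw [(hd t ht).deriv]
      have : t⁻¹ ≤ (riccati w t (n t) / t) / n t ^ 2 := by
        rw [div_div, le_div_iff₀ (by positivity), ← mul_assoc, inv_mul_cancel₀ htp.ne', one_mul]
        exact hq
      rw [neg_div]; linarith
  have hlim : Tendsto n (𝓝[>] 0) (𝓝 0) := by
    have hlog : Tendsto (fun t => ((n s₀)⁻¹ + Real.log s₀ - Real.log t)⁻¹) (𝓝[>] 0) (𝓝 0) := by
      refine tendsto_inv_atTop_zero.comp ?_
      simp only [sub_eq_add_neg]
      exact tendsto_atTop_add_const_left _ _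
        (tendsto_neg_atBot_atTop.comp Real.tendsto_log_nhdsGT_zero)
    have hev : ∀ᶠ t in 𝓝[>] (0 : ℝ), t ∈ Ioc 0 s₀ := Ioc_mem_nhdsGT hs₀
    refine squeeze_zero' (hev.mono fun t ht => (hnpos t ht).le) (hev.mono fun t ht => ?_) hlog
    have h1 := hanti ht hs₀mem ht.2
    have h2 := Real.log_le_log ht.1 ht.2
    have h3 := inv_pos.2 (hnpos s₀ hs₀mem)
    simp only at h1
    rw [le_inv_comm₀ (hnpos t ht) (by linarith)]
    linarith
  refine ⟨Function.update n 0 0, ?_, by simp, fun s hs => ?_⟩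
  · intro s hs
    rcases hs.1.eq_or_lt with rfl | h
    · rw [continuousWithinAt_update_same]
      exact hlim.mono_left (nhdsWithin_mono _ fun u hu => lt_of_le_of_ne hu.1.1 (Ne.symm hu.2))
    · have hca : ContinuousAt n s := (hder s ⟨h, hs.2⟩).continuousAt
      exact ((continuousAt_update_of_ne h.ne').2 hca).continuousWithinAt
  · rw [Function.update_of_ne hs.1.ne']
    refine ⟨hnpos s ⟨hs.1, hs.2.le⟩, (hder' s hs).congr_of_eventuallyEq ?_⟩
    filter_upwards [Ioi_mem_nhds hs.1] with u hu
    exact Function.update_of_ne (ne_of_gt hu) _ _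

/-! ### Iterated logarithms and their products -/

lemma Xk_mem_Ioo {a : ℝ} (ha : 1 < a) {s : ℝ} (hs : s ∈ Ioo (0 : ℝ) 1) (k : ℕ) :
    Xk a k s ∈ Ioo (0 : ℝ) 1 := by
  induction k with
  | zero => exact hs
  | succ k ih =>
    have h := Real.log_neg ih.1 ih.2
    exact ⟨inv_pos.2 (by linarith), inv_lt_one_of_one_lt₀ (by linarith)⟩

lemma Xk_succ_le {a : ℝ} (ha : 1 < a) {s : ℝ} (hs : s ∈ Ioo (0 : ℝ) 1) (k : ℕ) :
    Xk a (k + 1) s ≤ a⁻¹ := by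
  have ih := Xk_mem_Ioo ha hs k
  have h := Real.log_neg ih.1 ih.2
  exact inv_anti₀ (by linarith) (by linarith)

lemma piX_succ (a : ℝ) (k : ℕ) (s : ℝ) : piX a (k + 1) s = piX a k s * Xk a (k + 1) s :=
  Finset.prod_Icc_succ_top (by omega) _

lemma piX_zero (a s : ℝ) : piX a 0 s = 1 := by simp [piX]

lemma piX_one (a s : ℝ) : piX a 1 s = Xk a 1 s := by simp [piX]

lemma piX_pos {a : ℝ} (ha : 1 < a) {s : ℝ} (hs : s ∈ Ioo (0 : ℝ) 1) (k : ℕ) : 0 < piX a k s :=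
  Finset.prod_pos fun i _ => (Xk_mem_Ioo ha hs i).1

lemma piX_add_le {a : ℝ} (ha : 1 < a) {s : ℝ} (hs : s ∈ Ioo (0 : ℝ) 1) (m k : ℕ) :
    piX a (k + m) s ≤ piX a m s * a⁻¹ ^ k := by
  induction k with
  | zero => simp
  | succ k ih =>
    rw [Nat.add_right_comm, piX_succ, pow_succ, ← mul_assoc]
    have := piX_pos ha hs m
    exact mul_le_mul ih (Xk_succ_le ha hs _) (Xk_mem_Ioo ha hs _).1.le (by positivity)

lemma piX_le {a : ℝ} (ha : 1 < a) {s : ℝ} (hs : s ∈ Ioo (0 : ℝ) 1) (k : ℕ) :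
    piX a k s ≤ a⁻¹ ^ k := by
  simpa [piX_zero] using piX_add_le ha hs 0 k

lemma summable_geom {a : ℝ} (ha : 1 < a) : Summable fun k : ℕ => a⁻¹ ^ k :=
  summable_geometric_of_lt_one (by positivity) (inv_lt_one_of_one_lt₀ ha)

lemma piX_succ_le {a : ℝ} (ha : 1 < a) {s : ℝ} (hs : s ∈ Ioo (0 : ℝ) 1) (k : ℕ) :
    piX a (k + 1) s ≤ a⁻¹ ^ k :=
  (piX_le ha hs _).trans
    (pow_le_pow_of_le_one (by positivity) (inv_le_one_of_one_le₀ ha.le) (Nat.le_succ k))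

lemma summable_piX {a : ℝ} (ha : 1 < a) {s : ℝ} (hs : s ∈ Ioo (0 : ℝ) 1) :
    Summable fun k => piX a (k + 1) s :=
  .of_nonneg_of_le (fun _ => (piX_pos ha hs _).le) (piX_succ_le ha hs) (summable_geom ha)

lemma piX_sq_le {a : ℝ} (ha : 1 < a) {s : ℝ} (hs : s ∈ Ioo (0 : ℝ) 1) (k : ℕ) :
    piX a (k + 1) s ^ 2 ≤ a⁻¹ ^ k := by
  have h := piX_pos ha hs (k + 1)
  have h1 : piX a (k + 1) s ≤ 1 := (piX_le ha hs _).trans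
    (pow_le_one₀ (by positivity) (inv_le_one_of_one_le₀ ha.le))
  exact (by nlinarith : piX a (k + 1) s ^ 2 ≤ piX a (k + 1) s).trans (piX_succ_le ha hs k)

lemma summable_piX_sq {a : ℝ} (ha : 1 < a) {s : ℝ} (hs : s ∈ Ioo (0 : ℝ) 1) :
    Summable fun k => piX a (k + 1) s ^ 2 :=
  .of_nonneg_of_le (fun _ => sq_nonneg _) (piX_sq_le ha hs) (summable_geom ha)

lemma hasDerivAt_Xk {a : ℝ} (ha : 1 < a) {s : ℝ} (hs : s ∈ Ioo (0 : ℝ) 1) (k : ℕ) :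
    HasDerivAt (Xk a k) (piX a k s * Xk a k s / s) s := by
  have hs0 := hs.1.ne'
  induction k with
  | zero =>
    have : piX a 0 s * Xk a 0 s / s = 1 := by simp [piX_zero, Xk, hs0]
    rw [this]
    exact hasDerivAt_id s
  | succ k ih =>
    have hm := Xk_mem_Ioo ha hs k
    have hl := Real.log_neg hm.1 hm.2
    have hne : a - Real.log (Xk a k s) ≠ 0 := by linarith
    have h := ((ih.log hm.1.ne').const_sub a).fun_inv hne
    have e : piX a (k + 1) s * Xk a (k + 1) s / s =
        -(-(piX a k s * Xk a k s / s / Xk a k s)) / (a - Real.log (Xk a k s)) ^ 2 := by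
      have hX : Xk a (k + 1) s = (a - Real.log (Xk a k s))⁻¹ := rfl
      rw [piX_succ, hX]
      have := hm.1.ne'
      field_simp
    rw [e]
    exact h

lemma hasDerivAt_piX {a : ℝ} (ha : 1 < a) {s : ℝ} (hs : s ∈ Ioo (0 : ℝ) 1) (k : ℕ) :
    HasDerivAt (piX a k) (piX a k s * (∑ i ∈ Finset.range k, piX a (i + 1) s) / s) s := by
  induction k with
  | zero =>
    have : piX a 0 = fun _ => 1 := funext (piX_zero a)
    simpa [this] using hasDerivAt_const s (1 : ℝ)
  | succ k ih =>
    have h := ih.mul (hasDerivAt_Xk ha hs (k + 1))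
    have e : piX a (k + 1) = piX a k * Xk a (k + 1) := funext (piX_succ a k)
    rw [e]
    refine h.congr_deriv ?_
    rw [Finset.sum_range_succ, Pi.mul_apply, piX_succ]
    ring

/-! ### The series of products -/

/-- The series `X₁ + X₁X₂ + X₁X₂X₃ + ⋯`. -/
def sumPi (a s : ℝ) : ℝ := ∑' k : ℕ, piX a (k + 1) s

/-- The series `X₁² + X₁²X₂² + ⋯`. -/
def sumPiSq (a s : ℝ) : ℝ := ∑' k : ℕ, piX a (k + 1) s ^ 2

/-- The differentiated series telescopes: `∑ π_k (π_1 + ⋯ + π_k) = ((∑ π_k)² + ∑ π_k²) / 2`. -/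
lemma hasDerivAt_sumPi {a : ℝ} (ha : 1 < a) {s : ℝ} (hs : s ∈ Ioo (0 : ℝ) 1) :
    HasDerivAt (sumPi a) ((sumPi a s ^ 2 + sumPiSq a s) / 2 / s) s := by
  set B : ℝ := ∑' k : ℕ, a⁻¹ ^ k with hB
  have hsub : ∀ y ∈ Ioo (s / 2) 1, y ∈ Ioo (0 : ℝ) 1 := fun y hy =>
    ⟨by linarith [hs.1, hy.1], hy.2⟩
  have hpart : ∀ y ∈ Ioo (0 : ℝ) 1, ∀ k, ∑ i ∈ Finset.range k, piX a (i + 1) y ≤ B := by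
    intro y hy k
    exact (Finset.sum_le_sum fun i _ => piX_succ_le ha hy i).trans
      ((summable_geom ha).sum_le_tsum _ fun i _ => by positivity)
  have hbound : ∀ (k : ℕ), ∀ y ∈ Ioo (s / 2) 1,
      ‖piX a (k + 1) y * (∑ i ∈ Finset.range (k + 1), piX a (i + 1) y) / y‖ ≤
        a⁻¹ ^ k * (B / (s / 2)) := by
    intro k y hy
    have hy' := hsub y hy
    have h1 := (piX_pos ha hy' (k + 1)).le
    have h2 : 0 ≤ ∑ i ∈ Finset.range (k + 1), piX a (i + 1) y :=
      Finset.sum_nonneg fun i _ => (piX_pos ha hy' _).le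
    have hsp := hs.1
    rw [Real.norm_of_nonneg (div_nonneg (mul_nonneg h1 h2) hy'.1.le), mul_div_assoc]
    exact mul_le_mul (piX_succ_le ha hy' k)
      (div_le_div₀ (h2.trans (hpart y hy' _)) (hpart y hy' _) (by positivity) hy.1.le)
      (div_nonneg h2 hy'.1.le) (by positivity)
  have hmem : s ∈ Ioo (s / 2) 1 := ⟨by linarith [hs.1], hs.2⟩
  have hsum := (summable_geom ha).mul_right (B / (s / 2))
  have hd := hasDerivAt_tsum_of_isPreconnected hsum isOpen_Ioo isPreconnected_Ioo
    (fun k y hy => hasDerivAt_piX ha (hsub y hy) (k + 1)) hbound hmem (summable_piX ha hs) hmem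
  have hval : ∑' k : ℕ, piX a (k + 1) s * (∑ i ∈ Finset.range (k + 1), piX a (i + 1) s) / s =
      (sumPi a s ^ 2 + sumPiSq a s) / 2 / s := by
    refine HasSum.tsum_eq ?_
    have hs' : Summable fun k : ℕ =>
        piX a (k + 1) s * (∑ i ∈ Finset.range (k + 1), piX a (i + 1) s) / s :=
      .of_norm_bounded hsum fun k => hbound k s hmem
    rw [hs'.hasSum_iff_tendsto_nat]
    have hfin : ∀ N : ℕ, ∑ k ∈ Finset.range N,
        piX a (k + 1) s * (∑ i ∈ Finset.range (k + 1), piX a (i + 1) s) / s =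
        ((∑ k ∈ Finset.range N, piX a (k + 1) s) ^ 2 +
          ∑ k ∈ Finset.range N, piX a (k + 1) s ^ 2) / 2 / s := by
      intro N
      induction N with
      | zero => simp
      | succ N ih =>
        rw [Finset.sum_range_succ, ih]
        simp only [Finset.sum_range_succ]
        ring
    simp only [hfin]
    exact ((((summable_piX ha hs).hasSum.tendsto_sum_nat.pow 2).add
      (summable_piX_sq ha hs).hasSum.tendsto_sum_nat).div_const 2).div_const s
  rw [← hval]
  exact hd

lemma continuousOn_sumPiSq {a : ℝ} (ha : 1 < a) : ContinuousOn (sumPiSq a) (Ioo 0 1) :=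
  continuousOn_tsum (fun k s hs => (((hasDerivAt_piX ha hs (k + 1)).continuousAt).pow 2
    ).continuousWithinAt) (summable_geom ha) fun k s hs => by
      rw [Real.norm_of_nonneg (sq_nonneg _)]
      exact piX_sq_le ha hs k

lemma sumPiSq_nonneg (a s : ℝ) : 0 ≤ sumPiSq a s := tsum_nonneg fun _ => sq_nonneg _

lemma sumPi_nonneg {a : ℝ} (ha : 1 < a) {s : ℝ} (hs : s ∈ Ioo (0 : ℝ) 1) : 0 ≤ sumPi a s :=
  tsum_nonneg fun _ => (piX_pos ha hs _).le

lemma sumPiSq_le {a : ℝ} (ha : 1 < a) {s : ℝ} (hs : s ∈ Ioo (0 : ℝ) 1) :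
    sumPiSq a s ≤ sumPi a s ^ 2 := by
  have h1 : sumPiSq a s ≤ ∑' k : ℕ, piX a (k + 1) s * sumPi a s := by
    refine (summable_piX_sq ha hs).tsum_le_tsum (fun k => ?_) ((summable_piX ha hs).mul_right _)
    rw [pow_two]
    exact mul_le_mul_of_nonneg_left
      ((summable_piX ha hs).le_tsum k fun i _ => (piX_pos ha hs _).le) (piX_pos ha hs _).le
  rwa [tsum_mul_right, ← sumPi, ← pow_two] at h1

/-- The series is `X₁ (1 + O(X₂))`. -/
lemma sumPi_le {a : ℝ} (ha : 1 < a) {s : ℝ} (hs : s ∈ Ioo (0 : ℝ) 1) :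
    sumPi a s ≤ Xk a 1 s * (1 + (∑' k : ℕ, a⁻¹ ^ k) * Xk a 2 s) := by
  have h2 : piX a 2 s = Xk a 1 s * Xk a 2 s := by rw [piX_succ, piX_one]
  have h := (summable_piX ha hs).tsum_eq_zero_add
  have h3 : ∑' k : ℕ, piX a (k + 1 + 1) s ≤ ∑' k : ℕ, piX a 2 s * a⁻¹ ^ k :=
    ((summable_nat_add_iff 1).2 (summable_piX ha hs)).tsum_le_tsum
      (fun k => piX_add_le ha hs 2 k) ((summable_geom ha).mul_left _)
  rw [tsum_mul_left, h2] at h3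
  rw [sumPi, h, zero_add, piX_one]
  linarith

/-! ### Behaviour near zero -/

lemma tendsto_sub_log (a : ℝ) : Tendsto (fun s => a - Real.log s) (𝓝[>] 0) atTop := by
  simp only [sub_eq_add_neg]
  exact tendsto_atTop_add_const_left _ _
    (tendsto_neg_atBot_atTop.comp Real.tendsto_log_nhdsGT_zero)

lemma tendsto_Xk_succ (a : ℝ) (k : ℕ) :
    Tendsto (Xk a (k + 1)) (𝓝[>] 0) (𝓝[>] 0) := by
  have h : Tendsto (Xk a k) (𝓝[>] 0) (𝓝[>] 0) := by
    induction k with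
    | zero => exact tendsto_id
    | succ k ih => exact tendsto_inv_atTop_nhdsGT_zero.comp ((tendsto_sub_log a).comp ih)
  exact tendsto_inv_atTop_nhdsGT_zero.comp ((tendsto_sub_log a).comp h)

/-- A quantitative case of `s = o(X₁(s)²)`: exponentials beat powers in the variable `1 / X₁ = a - log s`. -/
lemma eventually_le_sq (a : ℝ) : ∀ᶠ s in 𝓝[>] (0 : ℝ), s ≤ Xk a 1 s ^ 2 / 100 := by
  have h := (((Real.tendsto_pow_mul_exp_neg_atTop_nhds_zero 2).comp (tendsto_sub_log a)).const_mul
    (Real.exp a)).eventually_le_const (show Real.exp a * 0 < 1 / 100 by norm_num)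
  filter_upwards [h, self_mem_nhdsWithin, (tendsto_sub_log a).eventually_gt_atTop 0]
    with s hs hs0 hpos
  have hX : Xk a 1 s = (a - Real.log s)⁻¹ := rfl
  have he : Real.exp a * Real.exp (-(a - Real.log s)) = s := by
    rw [← Real.exp_add, show a + -(a - Real.log s) = Real.log s by ring, Real.exp_log hs0]
  have h2 : s * (a - Real.log s) ^ 2 ≤ 1 / 100 := by
    calc s * (a - Real.log s) ^ 2
        = Real.exp a * ((a - Real.log s) ^ 2 * Real.exp (-(a - Real.log s))) := by
          rw [← mul_left_comm, he]; ring
      _ ≤ 1 / 100 := hs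
  rw [hX, inv_pow, ← one_div, div_right_comm, le_div_iff₀ (by positivity)]
  exact h2

/-- With `x = X₁`, `P = sumPi`, `S = sumPiSq` the function `P / 2 + x²` is a strict subsolution.
The quadratic terms cancel, and at order `x³` the gain `2 x³` from `s (x²)' = 2 x³` beats `P x²` and
`S P / 8`, which are about `x³` and `x³ / 8`. -/
lemma subsolution_ineq {x P S s : ℝ} (hx0 : 0 < x) (hx : x ≤ 1 / 100) (hP0 : 0 ≤ P)
    (hP : P ≤ 11 / 10 * x) (hS : S ≤ P ^ 2) (hs0 : 0 < s) (hs : s ≤ x ^ 2 / 100) :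
    (P / 2 + x ^ 2) ^ 2 + 2 * s * (P / 2 + x ^ 2) + s * (P / 2 + x ^ 2) ^ 2 +
      1 / 8 * S * (2 + 2 * (P / 2 + x ^ 2) + (P / 2 + x ^ 2) ^ 2) <
      (P ^ 2 + S) / 4 + 2 * x ^ 3 := by
  set c := P / 2 + x ^ 2 with hc
  have hx2 : x ^ 2 ≤ 1 / 100 * x := by nlinarith
  have hc0 : 0 ≤ c := by positivity
  have hcx : c ≤ 6 / 10 * x := by linarith
  have hcc : 2 * c + c ^ 2 ≤ 2 * x := by nlinarith
  have hcc0 : 0 ≤ 2 * c + c ^ 2 := by positivity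
  have hSx : S ≤ 2 * x ^ 2 := by nlinarith
  have e1 : s * (2 * c + c ^ 2) ≤ x ^ 2 / 100 * (2 * x) := mul_le_mul hs hcc hcc0 (by positivity)
  have e2 : S * (2 * c + c ^ 2) ≤ 2 * x ^ 2 * (2 * x) := mul_le_mul hSx hcc hcc0 (by positivity)
  have e3 : P * x ^ 2 ≤ 11 / 10 * x * x ^ 2 := mul_le_mul_of_nonneg_right hP (by positivity)
  have e4 : x ^ 2 * x ^ 2 ≤ 1 / 100 * x * x ^ 2 := mul_le_mul_of_nonneg_right hx2 (by positivity)
  have hx3 : 0 < x ^ 3 := by positivity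
  have e5 : c ^ 2 = P ^ 2 / 4 + P * x ^ 2 + x ^ 2 * x ^ 2 := by rw [hc]; ring
  nlinarith

theorem singular_ode_solvable (a : ℝ) (ha : 1 < a) :
    ∃ δ > (0 : ℝ), δ < Real.exp (a - 1) ∧ ∃ n : ℝ → ℝ,
      ContinuousOn n (Set.Ico 0 δ) ∧
      (∀ s ∈ Set.Ioo 0 δ, DifferentiableAt ℝ n s) ∧
      n 0 = 0 ∧
      ∀ s ∈ Set.Ioo 0 δ,
        (1 + (1 / 8) * ∑' j : ℕ, (piX a (j + 1) s) ^ 2) - 1 =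
          (s * deriv n s - (n s) ^ 2 - 2 * s * n s - s * (n s) ^ 2) /
            (2 + 2 * n s + (n s) ^ 2) := by
  -- Smallness of `X₁`, `X₂` and `s / X₁²` near `0` fixes the interval.
  set B : ℝ := ∑' k : ℕ, a⁻¹ ^ k with hB
  have hX1 : ∀ᶠ s in 𝓝[>] (0 : ℝ), Xk a 1 s ≤ 1 / 100 :=
    ((tendsto_Xk_succ a 0).mono_right nhdsWithin_le_nhds).eventually_le_const (by norm_num)
  have hX2 : ∀ᶠ s in 𝓝[>] (0 : ℝ), B * Xk a 2 s ≤ 1 / 10 :=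
    (((tendsto_Xk_succ a 1).mono_right nhdsWithin_le_nhds).const_mul B).eventually_le_const
      (by norm_num)
  obtain ⟨u, hu0, hu⟩ := mem_nhdsGT_iff_exists_Ioc_subset.1
    ((hX1.and hX2).and (eventually_le_sq a))
  have hu0' : 0 < u := hu0
  set δ : ℝ := min u (1 / 2) with hδ
  have hδ0 : 0 < δ := lt_min hu0' (by norm_num)
  have hδ1 : δ ≤ 1 / 2 := min_le_right _ _
  have h01 : ∀ s ∈ Ioc 0 δ, s ∈ Ioo (0 : ℝ) 1 := fun s hs => ⟨hs.1, by linarith [hs.2]⟩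
  have hnear : ∀ s ∈ Ioc 0 δ, (Xk a 1 s ≤ 1 / 100 ∧ B * Xk a 2 s ≤ 1 / 10) ∧
      s ≤ Xk a 1 s ^ 2 / 100 := fun s hs => hu ⟨hs.1, hs.2.trans (min_le_left _ _)⟩
  have hx0 : ∀ s ∈ Ioc 0 δ, 0 < Xk a 1 s := fun s hs => (Xk_mem_Ioo ha (h01 s hs) 1).1
  have hP : ∀ s ∈ Ioc 0 δ, sumPi a s ≤ 11 / 10 * Xk a 1 s := by
    intro s hs
    have h1 := sumPi_le ha (h01 s hs)
    have h2 := mul_le_mul_of_nonneg_left (hnear s hs).1.2 (hx0 s hs).le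
    linarith
  have hP0 : ∀ s ∈ Ioc 0 δ, 0 ≤ sumPi a s := fun s hs => sumPi_nonneg ha (h01 s hs)
  have hP1 : ∀ s ∈ Ioc 0 δ, sumPi a s ≤ 1 := fun s hs => by
    linarith [hP s hs, (hnear s hs).1.1]
  obtain ⟨n, hn, hn0, hnd⟩ := exists_riccati_of_subsolution (fun s => 1 / 8 * sumPiSq a s)
    (fun s => sumPi a s / 2 + Xk a 1 s ^ 2)
    (fun s => (sumPi a s ^ 2 + sumPiSq a s) / 2 / s / 2 +
      2 * Xk a 1 s * (Xk a 1 s * Xk a 1 s / s)) δ hδ0 (by linarith)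
    (continuousOn_const.mul ((continuousOn_sumPiSq ha).mono h01))
    (fun s hs => mul_nonneg (by norm_num) (sumPiSq_nonneg a s))
    (fun s hs => by nlinarith [sumPiSq_le ha (h01 s hs), hP0 s hs, hP1 s hs])
    (fun s hs => by
      have h1 := hasDerivAt_Xk ha (h01 s hs) 1
      rw [piX_one] at h1
      exact (((hasDerivAt_sumPi ha (h01 s hs)).div_const 2).add (h1.fun_pow 2)).congr_deriv
        (by simp))
    (fun s hs => by have := hx0 s hs; have := hP0 s hs; positivity)
    (fun s hs => by nlinarith [hx0 s hs, (hnear s hs).1.1, hP1 s hs])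
    (fun s hs => by
      have h := subsolution_ineq (hx0 s hs) (hnear s hs).1.1 (hP0 s hs) (hP s hs)
        (sumPiSq_le ha (h01 s hs)) hs.1 (hnear s hs).2
      have hs0 := hs.1.ne'
      have e : s * ((sumPi a s ^ 2 + sumPiSq a s) / 2 / s / 2 +
          2 * Xk a 1 s * (Xk a 1 s * Xk a 1 s / s)) =
          (sumPi a s ^ 2 + sumPiSq a s) / 4 + 2 * Xk a 1 s ^ 3 := by
        field_simp
        ring
      rw [e]
      exact h)
  refine ⟨δ, hδ0, ?_, n, hn, fun s hs => (hnd s hs).2.differentiableAt, hn0, fun s hs => ?_⟩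
  · have := Real.one_lt_exp_iff.2 (sub_pos.2 ha)
    linarith
  · obtain ⟨hpos, hd⟩ := hnd s hs
    have hs0 := hs.1.ne'
    have hden : 2 + 2 * n s + n s ^ 2 ≠ 0 := by positivity
    rw [hd.deriv, mul_div_cancel₀ _ hs0, eq_div_iff hden]
    simp only [riccati, sumPiSq]
    ring
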